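/- Let k ≥ 2 and r ≥ 0 be integers, let n ≥ k + r + 1, and let δ ∈ [0,1] be such that M := Σ_{i=1}^{r} C(n−i, k−1) + δ·C(n−(r+1), k−1) is an integer. Then the family L_{n,k}(M) of the first M k-subsets of [n] in lexicographic order satisfies I(L_{n,k}(M)) ≥ (r + δ²)·C(n−1, k−1)². -/

import Mathlib

open Finset

/-- The total intersection of a family: `I(F) = ∑_{A∈F} ∑_{B∈F} |A ∩ B|`. -/
def totalInt (F : Finset (Finset ℕ)) : ℕ :=
  ∑ A ∈ F, ∑ B ∈ F, (A ∩ B).card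

/-- The degree of a set `S` in the family `F`: the number of members of `F` containing `S`. -/
def degF (F : Finset (Finset ℕ)) (S : Finset ℕ) : ℕ :=
  (F.filter fun A => S ⊆ A).card

/-- `A` strictly precedes `B` in the lexicographic order on finite sets of positive integers:
the minimal element of the symmetric difference `A Δ B` belongs to `A`. -/
def lexLt (A B : Finset ℕ) : Prop :=
  ∃ m ∈ A \ B, ∀ x ∈ (A \ B) ∪ (B \ A), m ≤ x

/-- `S` is an initial segment (prefix) of the `k`-element subsets of `[n] = {1,…,n}`
under the lexicographic order. -/
def IsLexPrefix (n k : ℕ) (S : Finset (Finset ℕ)) : Prop :=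
  S ⊆ (Icc 1 n).powersetCard k ∧
    ∀ A ∈ S, ∀ B ∈ (Icc 1 n).powersetCard k, lexLt B A → B ∈ S

/-- The cardinality of the family `L_{n,k,t}^{(r)}`:
`C(n−t+1, k−t+1) − C(n−(t+r−1), k−t+1)`. -/
def lexStarCard (n k t r : ℕ) : ℕ :=
  (n - t + 1).choose (k - t + 1) - (n - (t + r - 1)).choose (k - t + 1)

/-- The full `t`-star with core `Y`: all `k`-subsets of `[n]` containing `Y`. -/
def fullStar (n k : ℕ) (Y : Finset ℕ) : Finset (Finset ℕ) :=
  ((Icc 1 n).powersetCard k).filter fun A => Y ⊆ A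

/-- The constant `C_s = 2^{2^{s−1}−1} · 10^{2^{s+2}−2} · (k² t⁴ (r+1)⁷)^{2^{s−1}}`. -/
def Cconst (k t r s : ℕ) : ℕ :=
  2 ^ (2 ^ (s - 1) - 1) * 10 ^ (2 ^ (s + 2) - 2) * (k ^ 2 * t ^ 4 * (r + 1) ^ 7) ^ (2 ^ (s - 1))

/-!
By double counting, `I(F) = ∑ x, deg(x)²`, where `deg(x)` is the number of members of `F` that
contain `x`. The `k`-sets meeting `{1,…,j}` form an initial segment of the lexicographic order, and
initial segments are nested according to their sizes, so `L_{n,k}(M)` contains every `k`-set meeting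
`{1,…,r}` and consists of `k`-sets meeting `{1,…,r+1}`. The first containment makes the elements
`1,…,r` attain the maximal degree `C(n-1,k-1)`. By the second, the `k`-sets containing `r+1` that
are missing from `L_{n,k}(M)` are among the `(1-δ)·C(n-(r+1),k-1)` missing `k`-sets that meet
`{1,…,r+1}`, and there are at most `(1-δ)·C(n-1,k-1)` of these; hence `deg(r+1) ≥ δ·C(n-1,k-1)`.
-/

section Degree

variable {F G : Finset (Finset ℕ)}

lemma totalInt_eq_sum_degF_sq {V : Finset ℕ} (hF : ∀ A ∈ F, A ⊆ V) :
    totalInt F = ∑ x ∈ V, degF F {x} ^ 2 := by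
  have card_inter : ∀ A ∈ F, ∀ B, #(A ∩ B) =
      ∑ x ∈ V, (if x ∈ A then 1 else 0) * (if x ∈ B then 1 else 0) := fun A hA B ↦ by
    rw [← inter_eq_right.mpr (inter_subset_left.trans (hF A hA)), ← filter_mem_eq_inter,
      card_filter]
    simp only [mem_inter, ite_zero_mul_ite_zero, mul_one]
  have sq_degF (x : ℕ) : degF F {x} ^ 2 =
      ∑ A ∈ F, ∑ B ∈ F, (if x ∈ A then 1 else 0) * (if x ∈ B then 1 else 0) := by
    simp only [degF, singleton_subset_iff, card_filter, sq, sum_mul_sum]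
  calc totalInt F
      = ∑ A ∈ F, ∑ x ∈ V, ∑ B ∈ F, (if x ∈ A then 1 else 0) * (if x ∈ B then 1 else 0) :=
        sum_congr rfl fun A hA ↦ by rw [sum_comm, sum_congr rfl fun B _ ↦ card_inter A hA B]
    _ = ∑ x ∈ V, degF F {x} ^ 2 := by rw [sum_comm]; simp only [sq_degF]

lemma degF_le_degF_of_subset (h : F ⊆ G) (S : Finset ℕ) : degF F S ≤ degF G S :=
  card_le_card (filter_subset_filter _ h)

lemma degF_add_card_le_of_subset (h : F ⊆ G) (S : Finset ℕ) :
    degF G S + #F ≤ degF F S + #G := by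
  have hsub : {A ∈ G | S ⊆ A} ⊆ {A ∈ F | S ⊆ A} ∪ (G \ F) := fun A ↦ by
    simp only [mem_filter, mem_union, mem_sdiff]
    tauto
  have hle : degF G S ≤ degF F S + #(G \ F) := (card_le_card hsub).trans (card_union_le _ _)
  have hcard := card_sdiff_add_card_eq_card h
  omega

end Degree

section Lex

variable {n k : ℕ} {L L' : Finset (Finset ℕ)} {A B : Finset ℕ}

lemma lexLt_or_lexLt_of_ne (h : A ≠ B) : lexLt A B ∨ lexLt B A := by
  have hne : ((A \ B) ∪ (B \ A)).Nonempty := symmDiff_nonempty.mpr h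
  obtain ⟨m, hm, hmin⟩ := exists_minimal hne
  have hle : ∀ x ∈ (A \ B) ∪ (B \ A), m ≤ x := fun x hx ↦ (le_total m x).elim id (hmin hx)
  rcases mem_union.mp hm with hm | hm
  · exact .inl ⟨m, hm, hle⟩
  · exact .inr ⟨m, hm, by rwa [union_comm]⟩

lemma IsLexPrefix.subset_of_card_le (hL : IsLexPrefix n k L) (hL' : IsLexPrefix n k L')
    (hcard : #L ≤ #L') : L ⊆ L' := by
  by_contra hnot
  obtain ⟨A, hA, hA'⟩ := not_subset.mp hnot
  have hsub : L' ⊆ L := fun B hB ↦ by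
    have hne : A ≠ B := fun h ↦ hA' (h ▸ hB)
    rcases lexLt_or_lexLt_of_ne hne with hAB | hBA
    · exact absurd (hL'.2 B hB A (hL.1 hA) hAB) hA'
    · exact hL.2 A hA B (hL'.1 hB) hBA
  exact hcard.not_gt (card_lt_card ⟨hsub, hnot⟩)

end Lex

/-- The union of the full stars centred at `1, …, j`, i.e. the family of all `k`-subsets of `[n]`
meeting `{1,…,j}`. These are the initial segments between which `L_{n,k}(M)` is sandwiched. -/
def starUnion (n k j : ℕ) : Finset (Finset ℕ) :=
  (Icc 1 j).biUnion fun i ↦ fullStar n k {i}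

section StarUnion

variable {n k j : ℕ} {A : Finset ℕ}

lemma mem_starUnion :
    A ∈ starUnion n k j ↔ A ∈ (Icc 1 n).powersetCard k ∧ ∃ a ∈ A, a ≤ j := by
  simp only [starUnion, fullStar, mem_biUnion, mem_filter, singleton_subset_iff]
  constructor
  · rintro ⟨a, ha, hA, haA⟩
    exact ⟨hA, a, haA, (mem_Icc.mp ha).2⟩
  · rintro ⟨hA, a, haA, haj⟩
    have ha := mem_Icc.mp ((mem_powersetCard.mp hA).1 haA)
    exact ⟨a, mem_Icc.mpr ⟨ha.1, haj⟩, hA, haA⟩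

lemma isLexPrefix_starUnion (n k j : ℕ) : IsLexPrefix n k (starUnion n k j) := by
  refine ⟨fun A hA ↦ (mem_starUnion.mp hA).1, fun A hA B hB ⟨m, hm, hmin⟩ ↦ ?_⟩
  obtain ⟨-, a, haA, haj⟩ := mem_starUnion.mp hA
  refine mem_starUnion.mpr ⟨hB, ?_⟩
  by_cases haB : a ∈ B
  · exact ⟨a, haB, haj⟩
  · have hma : m ≤ a := hmin a (mem_union_right _ (mem_sdiff.mpr ⟨haA, haB⟩))
    exact ⟨m, (mem_sdiff.mp hm).1, hma.trans haj⟩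

lemma powersetCard_sdiff_starUnion (n k j : ℕ) :
    (Icc 1 n).powersetCard k \ starUnion n k j = (Icc (j + 1) n).powersetCard k := by
  ext A
  simp only [mem_sdiff, mem_starUnion, mem_powersetCard, subset_iff, mem_Icc]
  grind

lemma card_starUnion_add_choose (n k j : ℕ) :
    #(starUnion n k j) + (n - j).choose k = n.choose k := by
  have hcard := card_sdiff_add_card_eq_card (isLexPrefix_starUnion n k j).1
  rw [powersetCard_sdiff_starUnion, card_powersetCard, card_powersetCard, Nat.card_Icc,
    Nat.card_Icc, Nat.add_sub_add_right, Nat.add_sub_cancel] at hcard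
  rw [add_comm, hcard]

lemma card_starUnion_succ (k : ℕ) (hj : j + 1 ≤ n) :
    #(starUnion n (k + 1) (j + 1)) = #(starUnion n (k + 1) j) + (n - (j + 1)).choose k := by
  have hpascal : (n - j).choose (k + 1) =
      (n - (j + 1)).choose k + (n - (j + 1)).choose (k + 1) := by
    rw [← Nat.choose_succ_succ', show n - (j + 1) + 1 = n - j by omega]
  have hcard := card_starUnion_add_choose n (k + 1) j
  have hcard_succ := card_starUnion_add_choose n (k + 1) (j + 1)
  omega

lemma card_starUnion (k : ℕ) (hj : j ≤ n) :
    #(starUnion n (k + 1) j) = ∑ i ∈ Icc 1 j, (n - i).choose k := by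
  induction j with
  | zero => simp [starUnion]
  | succ j ih =>
    rw [card_starUnion_succ k hj, ih (by omega), sum_Icc_succ_top (by omega)]

lemma degF_starUnion (k : ℕ) {x : ℕ} (hx : x ∈ Icc 1 n) (hxj : x ≤ j) :
    degF (starUnion n (k + 1) j) {x} = (n - 1).choose k := by
  have hstar : {A ∈ starUnion n (k + 1) j | {x} ⊆ A} =
      {A ∈ (Icc 1 n).powersetCard (k + 1) | {x} ⊆ A} := by
    ext A
    simp only [mem_filter, mem_starUnion, singleton_subset_iff]
    exact ⟨fun h ↦ ⟨h.1.1, h.2⟩, fun h ↦ ⟨⟨h.1, x, h.2, hxj⟩, h.2⟩⟩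
  rw [degF, hstar, card_filter_powersetCard_subset _ _ _ (singleton_subset_iff.mpr hx) (by simp)]
  simp

lemma mul_choose_le_degF_succ {F : Finset (Finset ℕ)} {δ : ℝ} (hδ : δ ≤ 1) (hj : j + 1 ≤ n)
    (hF : F ⊆ starUnion n (k + 1) (j + 1))
    (hcard : #(starUnion n (k + 1) j) + δ * (n - (j + 1)).choose k ≤ #F) :
    δ * (n - 1).choose k ≤ degF F {j + 1} := by
  have hmissing := degF_add_card_le_of_subset hF {j + 1}
  rw [degF_starUnion k (mem_Icc.mpr ⟨by omega, hj⟩) le_rfl, card_starUnion_succ k hj] at hmissing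
  have hchoose : (n - (j + 1)).choose k ≤ (n - 1).choose k := Nat.choose_le_choose k (by omega)
  have hscaled : (1 - δ) * (n - (j + 1)).choose k ≤ (1 - δ) * (n - 1).choose k :=
    mul_le_mul_of_nonneg_left (mod_cast hchoose) (sub_nonneg.mpr hδ)
  rify at hmissing
  linarith

lemma mul_choose_sq_add_degF_sq_le_totalInt {F : Finset (Finset ℕ)} (hj : j + 1 ≤ n)
    (hF : F ⊆ (Icc 1 n).powersetCard (k + 1)) (hstar : starUnion n (k + 1) j ⊆ F) :
    j * (n - 1).choose k ^ 2 + degF F {j + 1} ^ 2 ≤ totalInt F := by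
  have hdeg : ∀ x ∈ Icc 1 j, (n - 1).choose k ≤ degF F {x} := fun x hx ↦ by
    have hxn : x ∈ Icc 1 n := Icc_subset_Icc_right (by omega) hx
    rw [← degF_starUnion k hxn (mem_Icc.mp hx).2]
    exact degF_le_degF_of_subset hstar {x}
  calc j * (n - 1).choose k ^ 2 + degF F {j + 1} ^ 2
      = ∑ x ∈ Icc 1 j, (n - 1).choose k ^ 2 + degF F {j + 1} ^ 2 := by simp
    _ ≤ ∑ x ∈ Icc 1 j, degF F {x} ^ 2 + degF F {j + 1} ^ 2 := by gcongr with x hx; exact hdeg x hx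
    _ = ∑ x ∈ Icc 1 (j + 1), degF F {x} ^ 2 := (sum_Icc_succ_top (by omega) _).symm
    _ ≤ ∑ x ∈ Icc 1 n, degF F {x} ^ 2 := sum_le_sum_of_subset (Icc_subset_Icc_right hj)
    _ = totalInt F := (totalInt_eq_sum_degF_sq fun A hA ↦ (mem_powersetCard.mp (hF hA)).1).symm

end StarUnion

/-- **Lemma.** The lexicographic family `L_{n,k}(M)` of the first
`M = ∑_{i=1}^{r} C(n−i,k−1) + δ·C(n−(r+1),k−1)` `k`-subsets of `[n]` satisfies
`I(L_{n,k}(M)) ≥ (r+δ²)·C(n−1,k−1)²`. -/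
theorem stmt19 (k r n : ℕ) (hk : 2 ≤ k) (hn : k + r + 1 ≤ n)
    (δ : ℝ) (hδ : 0 ≤ δ ∧ δ ≤ 1)
    (M : ℕ)
    (hM : (M : ℝ) =
      (∑ i ∈ Icc 1 r, ((n - i).choose (k - 1) : ℝ)) + δ * ((n - (r + 1)).choose (k - 1) : ℝ))
    (L : Finset (Finset ℕ)) (hL : IsLexPrefix n k L) (hLcard : L.card = M) :
    ((r : ℝ) + δ ^ 2) * ((n - 1).choose (k - 1) : ℝ) ^ 2 ≤ (totalInt L : ℝ) := by
  obtain ⟨k, rfl⟩ : ∃ l, k = l + 1 := ⟨k - 1, by omega⟩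
  rw [add_tsub_cancel_right] at hM ⊢
  have hr : r + 1 ≤ n := by omega
  have hcard : (#L : ℝ) = #(starUnion n (k + 1) r) + δ * (n - (r + 1)).choose k := by
    rw [hLcard, hM, card_starUnion k (by omega), Nat.cast_sum]
  have hlower : starUnion n (k + 1) r ⊆ L := by
    refine (isLexPrefix_starUnion n (k + 1) r).subset_of_card_le hL ?_
    rify
    exact hcard ▸ le_add_of_nonneg_right (mul_nonneg hδ.1 (Nat.cast_nonneg _))
  have hupper : L ⊆ starUnion n (k + 1) (r + 1) := by
    refine hL.subset_of_card_le (isLexPrefix_starUnion n (k + 1) (r + 1)) ?_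
    rw [card_starUnion_succ k hr]
    rify
    exact hcard ▸ add_le_add_right (mul_le_of_le_one_left (Nat.cast_nonneg _) hδ.2) _
  have hdeg : δ * (n - 1).choose k ≤ degF L {r + 1} :=
    mul_choose_le_degF_succ hδ.2 hr hupper hcard.ge
  have hδ0 : 0 ≤ δ := hδ.1
  calc ((r : ℝ) + δ ^ 2) * (n - 1).choose k ^ 2
      = r * (n - 1).choose k ^ 2 + (δ * (n - 1).choose k) ^ 2 := by ring
    _ ≤ r * (n - 1).choose k ^ 2 + (degF L {r + 1} : ℝ) ^ 2 := by gcongr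
    _ ≤ totalInt L := mod_cast mul_choose_sq_add_degF_sq_le_totalInt hr hL.1 hlower
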